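/- Every reset word of the Černý automaton C_n (n ≥ 2) contains at least n−1 occurrences of the letter b; in particular, every reset word of C_n has length at least n−1. -/

import Mathlib

/-- The two-letter alphabet of the Černý automaton. -/
inductive Letter
  | a
  | b
deriving DecidableEq

/-- The action of a letter of the Černý automaton `C_n` on the state set `ZMod n`:
`a` sends `i` to `i + 1 (mod n)`, and `b` sends `n - 1` to `0` and fixes every other state. -/
def step (n : ℕ) : Letter → ZMod n → ZMod n
  | Letter.a, p => p + 1
  | Letter.b, p => if p = -1 then 0 else p

/-- The map `δ_w` induced by a word `w`, applying letters left to right. -/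
def run (n : ℕ) : List Letter → ZMod n → ZMod n
  | [], p => p
  | x :: w, p => run n w (step n x p)

/-!
A map that is injective off a set of `k` points lowers the cardinality of a finite set by at
most `k`. The letter `a` acts injectively and the letter `b` is injective off `n - 1`, so a word
can only lose one state for each `b` it contains, while a reset word must lose `n - 1` states.
-/

open Finset

section FiniteSets

variable {ι α β : Type*}

theorem card_le_card_image_add_card_of_injOn_compl [DecidableEq β]
    {f : α → β} {T : Finset α} (hf : Set.InjOn f (T : Set α)ᶜ) (S : Finset α) :
    #S ≤ #(S.image f) + #T := by
  classical
  have hinj : Set.InjOn f ↑(S \ T) := hf.mono fun _ hx => (mem_sdiff.mp hx).2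
  calc
    #S ≤ #(S \ T) + #T := card_le_card_sdiff_add_card
    _ = #((S \ T).image f) + #T := by rw [card_image_of_injOn hinj]
    _ ≤ #(S.image f) + #T := by gcongr; exact sdiff_subset

theorem card_le_card_image_foldl_add_sum [DecidableEq α] {f : α → ι → α} {d : ι → ℕ}
    (hf : ∀ i (S : Finset α), #S ≤ #(S.image (f · i)) + d i) (w : List ι) (S : Finset α) :
    #S ≤ #(S.image fun p => w.foldl f p) + (w.map d).sum := by
  induction w generalizing S with
  | nil => simp
  | cons i w ih =>
    calc
      #S ≤ #(S.image (f · i)) + d i := hf i S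
      _ ≤ #((S.image (f · i)).image fun p => w.foldl f p) + (w.map d).sum + d i := by
        gcongr; exact ih _
      _ = #(S.image fun p => (i :: w).foldl f p) + ((i :: w).map d).sum := by
        rw [image_image, List.map_cons, List.sum_cons, add_assoc, add_comm (d i)]
        rfl

end FiniteSets

/-- The exceptional states of a letter of the Černý automaton: off these the letter acts
injectively. For `b`, which identifies `n - 1` with `0`, we discard `n - 1`. -/
def exceptionalStates (n : ℕ) : Letter → Finset (ZMod n)
  | Letter.a => ∅
  | Letter.b => {-1}

theorem step_injOn_compl_exceptionalStates (n : ℕ) (x : Letter) :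
    Set.InjOn (step n x) (exceptionalStates n x : Set (ZMod n))ᶜ := by
  cases x with
  | a => exact (add_left_injective (1 : ZMod n)).injOn
  | b =>
    have step_eq {p : ZMod n} (hp : p ∈ (exceptionalStates n Letter.b : Set (ZMod n))ᶜ) :
        step n Letter.b p = p :=
      if_neg (by simpa [exceptionalStates] using hp)
    intro p hp q hq hpq
    rwa [step_eq hp, step_eq hq] at hpq

theorem sum_map_card_exceptionalStates (n : ℕ) (w : List Letter) :
    (w.map fun x => #(exceptionalStates n x)).sum = w.count Letter.b := by
  rw [List.sum_map_eq_nsmul_single Letter.b]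
  · simp [exceptionalStates]
  · rintro (_ | _) hx -
    · rfl
    · exact absurd rfl hx

theorem run_eq_foldl (n : ℕ) (w : List Letter) (p : ZMod n) :
    run n w p = w.foldl (fun q x => step n x q) p := by
  induction w generalizing p with
  | nil => rfl
  | cons x _ ih => exact ih (step n x p)

theorem card_le_card_image_run_add_count_b (n : ℕ) (w : List Letter) (S : Finset (ZMod n)) :
    #S ≤ #(S.image (run n w)) + w.count Letter.b := by
  have hstep (x : Letter) (S : Finset (ZMod n)) :
      #S ≤ #(S.image (step n x)) + #(exceptionalStates n x) :=
    card_le_card_image_add_card_of_injOn_compl (step_injOn_compl_exceptionalStates n x) S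
  rw [funext (run_eq_foldl n w), ← sum_map_card_exceptionalStates n w]
  exact card_le_card_image_foldl_add_sum hstep w S

/-- Every reset word of the Černý automaton `C_n` (`n ≥ 2`) contains at least `n - 1`
occurrences of the letter `b`; in particular, every reset word has length at least
`n - 1`. -/
theorem cerny_reset_word_count_b (n : ℕ) (hn : 2 ≤ n) (w : List Letter)
    (hw : ∃ c : ZMod n, ∀ p : ZMod n, run n w p = c) :
    n - 1 ≤ w.count Letter.b ∧ n - 1 ≤ w.length := by
  obtain ⟨c, hc⟩ := hw
  have : NeZero n := ⟨by omega⟩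
  have image_univ_eq : univ.image (run n w) = {c} := by
    rw [funext hc, image_const univ_nonempty]
  have le_one_add_count : n ≤ 1 + w.count Letter.b := by
    simpa only [card_univ, ZMod.card, image_univ_eq, card_singleton] using
      card_le_card_image_run_add_count_b n w univ
  have count_ge : n - 1 ≤ w.count Letter.b := Nat.sub_le_iff_le_add'.mpr le_one_add_count
  exact ⟨count_ge, count_ge.trans List.count_le_length⟩
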